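/- arXiv:1904.07007 — 2 statements merged into one kernel-verified Lean document; each statement's English description precedes it below -/
import Mathlib

section
/- Let β ∈ (1,2) with δ(β) = (1^m 0)^∞ for some m ≥ 1, let t ∈ [0, 1 − 1/β) have greedy β-expansion (t_i), and suppose N is the smallest positive integer with T_β^N(t) < t (equivalently, with t_{N+1}t_{N+2}… ≺ (t_i)). Then t_1…t_N is a β-Lyndon word and t_1…t_N 0^∞ ≼ (t_i) ≺ (t_1…t_N)^∞; in particular t lies in the β-Lyndon interval generated by t_1…t_N. -/
open Set Filter MeasureTheory

/-- The β-transformation `x ↦ βx (mod 1)`. -/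
noncomputable def Tbeta (β x : ℝ) : ℝ := Int.fract (β * x)

/-- The survivor set `K_β(t) = {x ∈ [0,1) : T_β^n x ≥ t for all n ≥ 0}`. -/
def Kset (β t : ℝ) : Set ℝ := {x | x ∈ Set.Ico (0 : ℝ) 1 ∧ ∀ n : ℕ, t ≤ (Tbeta β)^[n] x}

/-- Strict lexicographic order on sequences of naturals. -/
def seqLt (x y : ℕ → ℕ) : Prop := ∃ n, (∀ i, i < n → x i = y i) ∧ x n < y n

/-- Lexicographic order on sequences of naturals. -/
def seqLe (x y : ℕ → ℕ) : Prop := x = y ∨ seqLt x y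

/-- The `n`-th iterate of the left shift. -/
def shiftN (n : ℕ) (x : ℕ → ℕ) : ℕ → ℕ := fun i => x (i + n)

/-- The sequence `w 0^∞`. -/
def wordSeq (w : List ℕ) : ℕ → ℕ := fun i => w.getD i 0

/-- The periodic sequence `w^∞`. -/
def perSeq (w : List ℕ) : ℕ → ℕ := fun i => w.getD (i % w.length) 0

/-- The sequence obtained by concatenating the word `w` with the sequence `x`. -/
def catSeq (w : List ℕ) (x : ℕ → ℕ) : ℕ → ℕ :=
  fun i => if i < w.length then w.getD i 0 else x (i - w.length)

/-- The greedy β-expansion of `t`: the digit `b_{i+1}` is `⌊β T_β^i t⌋`. -/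
noncomputable def greedy (β t : ℝ) : ℕ → ℕ := fun i => (⌊β * (Tbeta β)^[i] t⌋).toNat

/-- `d` is the quasi-greedy β-expansion of `1`: the lexicographically largest
sequence in `{0,1}^ℕ` not ending in `0^∞` whose digits sum to `1` in base `β`. -/
def IsQuasiGreedy (β : ℝ) (d : ℕ → ℕ) : Prop :=
  (∀ i, d i ≤ 1) ∧ (¬ ∃ N, ∀ n, N ≤ n → d n = 0) ∧
  (∑' i : ℕ, (d i : ℝ) / β ^ (i + 1) = 1) ∧
  ∀ e : ℕ → ℕ, (∀ i, e i ≤ 1) → (¬ ∃ N, ∀ n, N ≤ n → e n = 0) →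
    (∑' i : ℕ, (e i : ℝ) / β ^ (i + 1) = 1) → seqLe e d

/-- `s = s_1…s_p` is a β-Lyndon word: `s_{i+1}…s_p ≻ s_1…s_{p-i}` for `1 ≤ i < p`
and `σ^n(s^∞) ≺ δ(β)` for all `n ≥ 0`. -/
def IsBetaLyndon (β : ℝ) (s : List ℕ) : Prop :=
  s ≠ [] ∧ (∀ a ∈ s, a ≤ 1) ∧
  (∀ i, 1 ≤ i → i < s.length →
    seqLt (wordSeq (s.take (s.length - i))) (wordSeq (s.drop i))) ∧
  (∀ d : ℕ → ℕ, IsQuasiGreedy β d → ∀ n : ℕ, seqLt (shiftN n (perSeq s)) d)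

/-- Left endpoint `t_L = Σ_{i=1}^p s_i β^{-i}` of the β-Lyndon interval generated by `s`. -/
noncomputable def lyndonLeft (β : ℝ) (s : List ℕ) : ℝ :=
  ∑ i ∈ Finset.range s.length, (s.getD i 0 : ℝ) / β ^ (i + 1)

/-- Right endpoint `t_R = (β^p/(β^p - 1)) t_L` of the β-Lyndon interval generated by `s`. -/
noncomputable def lyndonRight (β : ℝ) (s : List ℕ) : ℝ :=
  β ^ s.length / (β ^ s.length - 1) * lyndonLeft β s

/-- The union of all β-Lyndon intervals `[t_L, t_R)`. -/
noncomputable def lyndonUnionIco (β : ℝ) : Set ℝ :=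
  ⋃ s ∈ {s : List ℕ | IsBetaLyndon β s}, Set.Ico (lyndonLeft β s) (lyndonRight β s)

/-- The symbolic survivor set `K̃_β(t)` with upper bound sequence `d = δ(β)`. -/
def Ktilde (β t : ℝ) (d : ℕ → ℕ) : Set (ℕ → ℕ) :=
  {x | (∀ i, x i ≤ 1) ∧ ∀ n : ℕ, seqLe (greedy β t) (shiftN n x) ∧ seqLe (shiftN n x) d}

/-- The set-valued bifurcation set `E_β`. -/
def Eset (β : ℝ) : Set ℝ :=
  {t | t ∈ Set.Ico (0 : ℝ) 1 ∧ ∀ t', t < t' → t' < 1 → Kset β t' ≠ Kset β t}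

/-- The dimension bifurcation set `B_β`. -/
def Bset (β : ℝ) : Set ℝ :=
  {t | t ∈ Set.Ico (0 : ℝ) 1 ∧ ∀ t', t < t' → t' < 1 → dimH (Kset β t') ≠ dimH (Kset β t)}

/-- `β` is a multinacci number: `β^{m+1} = β^m + ⋯ + β + 1` for some `m ≥ 1`. -/
def IsMultinacci (β : ℝ) : Prop :=
  ∃ m : ℕ, 1 ≤ m ∧ β ^ (m + 1) = ∑ i ∈ Finset.range (m + 1), β ^ i

/-!
Expanding maps preserve order, so `t ↦ greedy β t` is strictly increasing for the lexicographic
order and intertwines `T_β` with the shift. The hypothesis on `N` thus says that `a = (t_i)`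
satisfies `σ^N a ≺ a` and `a ≼ σ^k a` for `0 < k < N`; comparing `a` with its own shifts, this makes
the prefix `t_1…t_N` Lyndon and gives `a ≺ (t_1…t_N)^∞`. What is special to `δ(β) = (1^m 0)^∞` is
that admissibility becomes a condition on runs: no point of `[0,1)` has `m + 1` consecutive nonzero
digits, because `∑_{i ≤ m + 1} β^{-i} = 1`. As `t < 1 - 1/β`, the prefix begins with `0` and not
with `01^m`, so periodic repetition creates neither a longer run nor `(1^m 0)^∞` itself.
-/

section LexicographicOrder

variable {x y : ℕ → ℕ}

theorem seqLt_iff_toLex_lt : seqLt x y ↔ toLex x < toLex y := Iff.rfl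

theorem seqLe_iff_toLex_le : seqLe x y ↔ toLex x ≤ toLex y := by
  rw [le_iff_eq_or_lt, toLex_inj]
  rfl

theorem seqLe_iff_not_seqLt : seqLe x y ↔ ¬ seqLt y x :=
  seqLe_iff_toLex_le.trans not_lt.symm

theorem IsQuasiGreedy.unique {β : ℝ} (hx : IsQuasiGreedy β x) (hy : IsQuasiGreedy β y) :
    x = y :=
  toLex_inj.1 <| le_antisymm
    (seqLe_iff_toLex_le.1 (hy.2.2.2 x hx.1 hx.2.1 hx.2.2.1))
    (seqLe_iff_toLex_le.1 (hx.2.2.2 y hy.1 hy.2.1 hy.2.2.1))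

end LexicographicOrder

section Prefixes

variable {a b : ℕ → ℕ} {N n : ℕ}

/-- The word formed by the first `n` letters of the sequence `a`, written with `List.ofFn` to match
the word `t_1…t_N` of the main theorem. -/
def seqPrefix (a : ℕ → ℕ) (n : ℕ) : List ℕ := List.ofFn fun i : Fin n => a i

@[simp]
theorem length_seqPrefix : (seqPrefix a n).length = n := List.length_ofFn

theorem mem_seqPrefix {c : ℕ} : c ∈ seqPrefix a n ↔ ∃ i : Fin n, a i = c := List.mem_ofFn

theorem take_seqPrefix (h : n ≤ N) : (seqPrefix a N).take n = seqPrefix a n :=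
  List.ext_getElem (by simpa using h) fun _ _ _ => by simp [seqPrefix]

theorem drop_seqPrefix (a : ℕ → ℕ) (N n : ℕ) :
    (seqPrefix a N).drop n = seqPrefix (shiftN n a) (N - n) :=
  List.ext_getElem (by simp) fun _ _ _ => by simp [seqPrefix, shiftN, add_comm]

theorem wordSeq_seqPrefix_of_lt {i : ℕ} (hi : i < n) : wordSeq (seqPrefix a n) i = a i := by
  simp [wordSeq, seqPrefix, hi]

theorem wordSeq_seqPrefix_le : wordSeq (seqPrefix a n) ≤ a := by
  intro i
  rcases lt_or_ge i n with hi | hi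
  · exact (wordSeq_seqPrefix_of_lt hi).le
  · simp [wordSeq, hi]

theorem seqLe_wordSeq_seqPrefix : seqLe (wordSeq (seqPrefix a n)) a :=
  seqLe_iff_toLex_le.2 (Pi.toLex_monotone wordSeq_seqPrefix_le)

theorem perSeq_seqPrefix (hN : 0 < N) (i : ℕ) : perSeq (seqPrefix a N) i = a (i % N) := by
  rw [← wordSeq_seqPrefix_of_lt (a := a) (Nat.mod_lt i hN), perSeq, length_seqPrefix, wordSeq]

theorem eq_mod_of_eq_add (hper : ∀ i < n, a (i + N) = a i) (i : ℕ) (hi : i < n + N) :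
    a i = a (i % N) := by
  induction i using Nat.strong_induction_on with
  | _ i ih =>
    rcases lt_or_ge i N with hiN | hNi
    · rw [Nat.mod_eq_of_lt hiN]
    · obtain ⟨i, rfl⟩ := Nat.exists_eq_add_of_le' hNi
      rcases N.eq_zero_or_pos with rfl | hN
      · rw [Nat.mod_zero]
      · rw [hper i (by lia), ih i (by lia) (by lia), Nat.add_mod_right]

theorem seqLt_perSeq_seqPrefix (hN : 0 < N) (h : seqLt (shiftN N a) a) :
    seqLt a (perSeq (seqPrefix a N)) := by
  obtain ⟨n, hagree, hlt⟩ := h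
  have hmod := eq_mod_of_eq_add hagree
  refine ⟨n + N, fun i hi => ?_, ?_⟩
  · rw [perSeq_seqPrefix hN, hmod i hi]
  · rw [perSeq_seqPrefix hN, Nat.add_mod_right, ← hmod n (by lia)]
    exact hlt

theorem seqLt_wordSeq_seqPrefix (hab : seqLe a b) (htail : seqLt (shiftN n b) (shiftN n a)) :
    seqLt (wordSeq (seqPrefix a n)) (wordSeq (seqPrefix b n)) := by
  rcases hab with rfl | ⟨k, hagree, hlt⟩
  · exact (lt_irrefl _ (seqLt_iff_toLex_lt.1 htail)).elim
  have hkn : k < n := by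
    by_contra! hnk
    obtain ⟨k, rfl⟩ := Nat.exists_eq_add_of_le' hnk
    have : seqLt (shiftN n a) (shiftN n b) := ⟨k, fun i hi => hagree (i + n) (by lia), hlt⟩
    exact lt_asymm (seqLt_iff_toLex_lt.1 htail) (seqLt_iff_toLex_lt.1 this)
  refine ⟨k, fun i hi => ?_, ?_⟩
  · rw [wordSeq_seqPrefix_of_lt (hi.trans hkn), wordSeq_seqPrefix_of_lt (hi.trans hkn), hagree i hi]
  · rwa [wordSeq_seqPrefix_of_lt hkn, wordSeq_seqPrefix_of_lt hkn]

theorem seqLt_wordSeq_take_drop_seqPrefix (hN : seqLt (shiftN N a) a)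
    (hmin : ∀ k, 0 < k → k < N → seqLe a (shiftN k a)) {i : ℕ} (hi₀ : 0 < i) (hi : i < N) :
    seqLt (wordSeq ((seqPrefix a N).take (N - i))) (wordSeq ((seqPrefix a N).drop i)) := by
  rw [take_seqPrefix (Nat.sub_le N i), drop_seqPrefix]
  refine seqLt_wordSeq_seqPrefix (hmin i hi₀ hi) ?_
  have hshift : shiftN (N - i) (shiftN i a) = shiftN N a :=
    funext fun j => congrArg a (by lia)
  rw [hshift]
  exact (seqLt_iff_toLex_lt.1 hN).trans_le
    (seqLe_iff_toLex_le.1 (hmin (N - i) (by lia) (by lia)))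

end Prefixes

section Runs

variable {w : List ℕ} {m : ℕ}

theorem perSeq_add_of_mod_eq_zero {k : ℕ} (hk : k % w.length = 0) (i : ℕ) :
    perSeq w (k + i) = perSeq w i := by
  rw [perSeq, perSeq, ← Nat.mod_add_mod, hk, zero_add]

theorem perSeq_le {M : ℕ} (hw : ∀ c ∈ w, c ≤ M) (i : ℕ) : perSeq w i ≤ M := by
  rw [perSeq]
  rcases lt_or_ge (i % w.length) w.length with hi | hi
  · rw [List.getD_eq_getElem _ _ hi]
    exact hw _ (List.getElem_mem hi)
  · rw [List.getD_eq_default _ _ hi]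
    exact M.zero_le

theorem perSeq_replicate_append_zero (m i : ℕ) :
    perSeq (List.replicate m 1 ++ [0]) i = if i % (m + 1) < m then 1 else 0 := by
  have hi : i % (m + 1) < m + 1 := Nat.mod_lt i m.succ_pos
  split_ifs with h
  · simp [perSeq, List.getElem?_append, h]
  · simp [perSeq, show i % (m + 1) = m by lia]

theorem perSeq_replicate_append_zero_eq_zero {i : ℕ} :
    perSeq (List.replicate m 1 ++ [0]) i = 0 ↔ i % (m + 1) = m := by
  have hi : i % (m + 1) < m + 1 := Nat.mod_lt i m.succ_pos
  rw [perSeq_replicate_append_zero]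
  split_ifs <;> lia

theorem seqLe_perSeq_replicate_append_zero {s : ℕ → ℕ} (hs : ∀ i, s i ≤ 1)
    (hrun : ∀ k, ∃ j < m + 1, s (k + j) = 0) : seqLe s (perSeq (List.replicate m 1 ++ [0])) := by
  rw [seqLe_iff_not_seqLt]
  rintro ⟨k, hagree, hlt⟩
  have hk : k % (m + 1) = m :=
    perSeq_replicate_append_zero_eq_zero.1 (by have := hs k; lia)
  have hblock : (k - m) % (m + 1) = 0 := by
    have := Nat.div_add_mod k (m + 1)
    rw [show k - m = (m + 1) * (k / (m + 1)) by lia, Nat.mul_mod_right]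
  have hmk : m ≤ k := hk ▸ Nat.mod_le k (m + 1)
  obtain ⟨j, hj, hzero⟩ := hrun (k - m)
  rcases eq_or_ne j m with rfl | hjm
  · rw [Nat.sub_add_cancel hmk] at hzero
    lia
  · rw [← hagree _ (by lia), perSeq_replicate_append_zero_eq_zero, ← Nat.mod_add_mod, hblock,
      zero_add, Nat.mod_eq_of_lt hj] at hzero
    exact hjm hzero

-- A window that leaves `w` meets the first letter of the next copy of `w`.
theorem exists_perSeq_eq_zero {i L : ℕ} (hi : i ≤ w.length) (h₀ : wordSeq w 0 = 0)
    (h : ∃ j < L, wordSeq w (i + j) = 0) : ∃ j < L, perSeq w (i + j) = 0 := by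
  obtain ⟨j, hj, hzero⟩ := h
  rcases lt_or_ge (i + j) w.length with hlt | hge
  · exact ⟨j, hj, by rwa [perSeq, Nat.mod_eq_of_lt hlt]⟩
  · exact ⟨w.length - i, by lia, by rwa [Nat.add_sub_cancel' hi, perSeq, Nat.mod_self]⟩

theorem exists_perSeq_eq_zero_of_forall_exists (hw : w ≠ []) (h₀ : wordSeq w 0 = 0) {L : ℕ}
    (hrun : ∀ k, ∃ j < L, wordSeq w (k + j) = 0) (k : ℕ) : ∃ j < L, perSeq w (k + j) = 0 := by
  have hk := Nat.mod_lt k (List.length_pos_iff.2 hw)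
  obtain ⟨j, hj, hzero⟩ := exists_perSeq_eq_zero hk.le h₀ (hrun _)
  exact ⟨j, hj, by rwa [perSeq, ← Nat.mod_add_mod, ← perSeq]⟩

theorem shiftN_perSeq_ne_perSeq_replicate_append_zero (hw : w ≠ []) (h₀ : wordSeq w 0 = 0)
    (hhead : ∃ j < m, wordSeq w (1 + j) = 0) (n : ℕ) :
    shiftN n (perSeq w) ≠ perSeq (List.replicate m 1 ++ [0]) := by
  -- A copy of `w` starts at some position `k` of `(1^m 0)^∞`; since `w` starts with `0`, a block
  -- `1^m 0` ends at `k`, so `w^∞` would start with `01^m`.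
  intro heq
  have hlen : 0 < w.length := List.length_pos_iff.2 hw
  obtain ⟨k, hk⟩ : ∃ k, (k + n) % w.length = 0 :=
    ⟨w.length * n - n, by rw [Nat.sub_add_cancel (Nat.le_mul_of_pos_left n hlen),
      Nat.mul_mod_right]⟩
  have hval (i : ℕ) : perSeq (List.replicate m 1 ++ [0]) (k + i) = perSeq w i := by
    rw [← heq, shiftN, add_right_comm, perSeq_add_of_mod_eq_zero hk]
  have hkm : k % (m + 1) = m := by
    rw [← perSeq_replicate_append_zero_eq_zero, ← add_zero k, hval, perSeq, Nat.zero_mod]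
    exact h₀
  obtain ⟨j, hj, hzero⟩ := exists_perSeq_eq_zero hlen h₀ hhead
  rw [← hval, perSeq_replicate_append_zero_eq_zero, ← Nat.mod_add_mod, hkm, ← add_assoc,
    Nat.add_mod_left, Nat.mod_eq_of_lt (by lia)] at hzero
  lia

theorem seqLt_shiftN_perSeq_replicate_append_zero (hw : w ≠ []) (hbin : ∀ c ∈ w, c ≤ 1)
    (h₀ : wordSeq w 0 = 0) (hrun : ∀ k, ∃ j < m + 1, wordSeq w (k + j) = 0)
    (hhead : ∃ j < m, wordSeq w (1 + j) = 0) (n : ℕ) :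
    seqLt (shiftN n (perSeq w)) (perSeq (List.replicate m 1 ++ [0])) := by
  refine (seqLe_perSeq_replicate_append_zero (fun i => perSeq_le hbin _) fun k => ?_).resolve_left
    (shiftN_perSeq_ne_perSeq_replicate_append_zero hw h₀ hhead n)
  simpa only [shiftN, add_right_comm] using
    exists_perSeq_eq_zero_of_forall_exists hw h₀ hrun (k + n)

end Runs

section PeriodicExpansions

variable {β : ℝ}

theorem summable_perSeq_div_pow (hβ : 1 < β) (w : List ℕ) :
    Summable fun i : ℕ => (perSeq w i : ℝ) / β ^ (i + 1) := by
  have hgeom : Summable fun i : ℕ => (w.sum : ℝ) * (1 / β) ^ (i + 1) :=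
    ((summable_nat_add_iff 1).2 <| summable_geometric_of_lt_one (by positivity)
      ((div_lt_one (by positivity)).2 hβ)).mul_left _
  refine hgeom.of_nonneg_of_le (fun i => by positivity) fun i => ?_
  rw [one_div_pow, mul_one_div]
  gcongr
  exact perSeq_le (fun _ => List.le_sum_of_mem) i

theorem tsum_perSeq_div_pow (hβ : 1 < β) {w : List ℕ} (hw : w ≠ []) :
    ∑' i : ℕ, (perSeq w i : ℝ) / β ^ (i + 1) = lyndonRight β w := by
  have hpow : 1 < β ^ w.length := one_lt_pow₀ hβ (List.length_pos_iff.2 hw).ne'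
  have hsplit := (summable_perSeq_div_pow hβ w).sum_add_tsum_nat_add w.length
  have hleft : ∑ i ∈ Finset.range w.length, (perSeq w i : ℝ) / β ^ (i + 1) = lyndonLeft β w :=
    Finset.sum_congr rfl fun i hi => by
      rw [perSeq, Nat.mod_eq_of_lt (Finset.mem_range.1 hi)]
  have htail (i : ℕ) : (perSeq w (i + w.length) : ℝ) / β ^ (i + w.length + 1) =
      (perSeq w i : ℝ) / β ^ (i + 1) / β ^ w.length := by
    rw [perSeq, Nat.add_mod_right, ← perSeq, div_div, ← pow_add, add_right_comm]
  simp only [hleft, htail, tsum_div_const] at hsplit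
  rw [lyndonRight]
  field_simp [(sub_pos.2 hpow).ne'] at hsplit ⊢
  linarith

theorem sum_one_div_pow_eq_one_of_tsum_eq_one (hβ : 1 < β) {m : ℕ}
    (hδ : ∑' i : ℕ, (perSeq (List.replicate m 1 ++ [0]) i : ℝ) / β ^ (i + 1) = 1) :
    ∑ i ∈ Finset.range (m + 1), 1 / β ^ (i + 1) = 1 := by
  have hpow : 1 < β ^ (m + 1) := one_lt_pow₀ hβ m.succ_ne_zero
  have hleft : lyndonLeft β (List.replicate m 1 ++ [0]) =
      ∑ i ∈ Finset.range m, 1 / β ^ (i + 1) := by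
    rw [lyndonLeft, List.length_append, List.length_replicate, List.length_singleton,
      Finset.sum_range_succ]
    simp only [List.getD_eq_getElem?_getD]
    have hones : ∀ i ∈ Finset.range m, (((List.replicate m 1 ++ [0])[i]?.getD 0 : ℕ) : ℝ) = 1 :=
      fun i hi => by simp [List.getElem?_append, Finset.mem_range.1 hi]
    rw [Finset.sum_congr rfl fun i hi => by rw [hones i hi]]
    simp
  rw [tsum_perSeq_div_pow hβ (by simp), lyndonRight, hleft] at hδ
  simp only [List.length_append, List.length_replicate, List.length_singleton] at hδ
  rw [Finset.sum_range_succ]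
  have := (sub_pos.2 hpow).ne'
  field_simp at hδ ⊢
  linarith

end PeriodicExpansions

section GreedyExpansions

variable {β t : ℝ}

theorem iterate_Tbeta_mem_Ico (ht : t ∈ Ico (0 : ℝ) 1) (k : ℕ) :
    (Tbeta β)^[k] t ∈ Ico (0 : ℝ) 1 := by
  cases k with
  | zero => exact ht
  | succ k =>
    rw [Function.iterate_succ_apply']
    exact ⟨Int.fract_nonneg _, Int.fract_lt_one _⟩

theorem greedy_iterate_Tbeta (β t : ℝ) (k : ℕ) :
    greedy β ((Tbeta β)^[k] t) = shiftN k (greedy β t) := by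
  funext i
  simp only [greedy, shiftN, Function.iterate_add_apply]

theorem natCast_greedy (hβ : 0 ≤ β) (ht : t ∈ Ico (0 : ℝ) 1) (k : ℕ) :
    (greedy β t k : ℤ) = ⌊β * (Tbeta β)^[k] t⌋ :=
  Int.toNat_of_nonneg (Int.floor_nonneg.2 (mul_nonneg hβ (iterate_Tbeta_mem_Ico ht k).1))

theorem greedy_add_iterate_Tbeta_succ (hβ : 0 ≤ β) (ht : t ∈ Ico (0 : ℝ) 1) (k : ℕ) :
    greedy β t k + (Tbeta β)^[k + 1] t = β * (Tbeta β)^[k] t := by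
  rw [Function.iterate_succ_apply', Tbeta, ← Int.cast_natCast, natCast_greedy hβ ht k,
    Int.floor_add_fract]

theorem greedy_le_one (hβ₀ : 0 ≤ β) (hβ : β ≤ 2) (ht : t ∈ Ico (0 : ℝ) 1) (k : ℕ) :
    greedy β t k ≤ 1 := by
  obtain ⟨hpos, hlt⟩ := iterate_Tbeta_mem_Ico (β := β) ht k
  have : ⌊β * (Tbeta β)^[k] t⌋ < 2 := Int.floor_lt.2 (by push_cast; nlinarith)
  have := natCast_greedy hβ₀ ht k
  lia

theorem greedy_zero_eq_zero (h : β * t < 1) : greedy β t 0 = 0 :=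
  Int.toNat_of_nonpos (Int.lt_add_one_iff.1 (Int.floor_lt.2 (by simpa using h)))

theorem sum_greedy_add_iterate_Tbeta (hβ : 0 < β) (ht : t ∈ Ico (0 : ℝ) 1) (n : ℕ) :
    ∑ i ∈ Finset.range n, (greedy β t i : ℝ) / β ^ (i + 1) + (Tbeta β)^[n] t / β ^ n = t := by
  induction n with
  | zero => simp
  | succ n ih =>
    rw [Finset.sum_range_succ, add_assoc, ← add_div, greedy_add_iterate_Tbeta_succ hβ.le ht,
      pow_succ', mul_div_mul_left _ _ hβ.ne', ih]

theorem sum_greedy_le (hβ : 0 < β) (ht : t ∈ Ico (0 : ℝ) 1) (n : ℕ) :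
    ∑ i ∈ Finset.range n, (greedy β t i : ℝ) / β ^ (i + 1) ≤ t := by
  have hrest : 0 ≤ (Tbeta β)^[n] t / β ^ n :=
    div_nonneg (iterate_Tbeta_mem_Ico ht n).1 (by positivity)
  linarith [sum_greedy_add_iterate_Tbeta hβ ht n]

theorem iterate_Tbeta_sub_iterate_Tbeta (hβ : 0 < β) {x y : ℝ} (hx : x ∈ Ico (0 : ℝ) 1)
    (hy : y ∈ Ico (0 : ℝ) 1) {n : ℕ} (h : ∀ i < n, greedy β x i = greedy β y i) :
    (Tbeta β)^[n] y - (Tbeta β)^[n] x = β ^ n * (y - x) := by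
  have hsum : ∑ i ∈ Finset.range n, (greedy β x i : ℝ) / β ^ (i + 1) =
      ∑ i ∈ Finset.range n, (greedy β y i : ℝ) / β ^ (i + 1) :=
    Finset.sum_congr rfl fun i hi => by rw [h i (Finset.mem_range.1 hi)]
  have hx' := sum_greedy_add_iterate_Tbeta hβ hx n
  have hy' := sum_greedy_add_iterate_Tbeta hβ hy n
  have hdiff : y - x = ((Tbeta β)^[n] y - (Tbeta β)^[n] x) / β ^ n := by
    rw [sub_div]
    linarith
  rw [hdiff, mul_div_cancel₀ _ (by positivity)]

theorem greedy_injOn (hβ : 1 < β) : InjOn (greedy β) (Ico 0 1) := by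
  intro x hx y hy hxy
  by_contra hne
  have hdist : 0 < |y - x| := abs_pos.2 (sub_ne_zero.2 (Ne.symm hne))
  obtain ⟨n, hn⟩ := pow_unbounded_of_one_lt (1 / |y - x|) hβ
  have hpow : 0 < β ^ n := by positivity
  have hexpand : |(Tbeta β)^[n] y - (Tbeta β)^[n] x| = β ^ n * |y - x| := by
    rw [iterate_Tbeta_sub_iterate_Tbeta (by positivity) hx hy fun i _ => congrFun hxy i, abs_mul,
      abs_of_pos hpow]
  obtain ⟨hx₀, hx₁⟩ := iterate_Tbeta_mem_Ico (β := β) hx n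
  obtain ⟨hy₀, hy₁⟩ := iterate_Tbeta_mem_Ico (β := β) hy n
  exact ((div_lt_iff₀ hdist).1 hn).not_ge
    (hexpand ▸ (abs_sub_lt_of_nonneg_of_lt hy₀ hy₁ hx₀ hx₁).le)

theorem greedy_monotoneOn (hβ : 0 < β) :
    MonotoneOn (fun t => toLex (greedy β t)) (Ico 0 1) := by
  intro x hx y hy hxy
  rw [← seqLe_iff_toLex_le, seqLe_iff_not_seqLt]
  rintro ⟨n, hagree, hlt⟩
  have hexpand :=
    iterate_Tbeta_sub_iterate_Tbeta hβ hx hy fun i hi => (hagree i hi).symm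
  have hle : (Tbeta β)^[n] x ≤ (Tbeta β)^[n] y :=
    sub_nonneg.1 (hexpand ▸ mul_nonneg (by positivity) (sub_nonneg.2 hxy))
  have hdigit : greedy β x n ≤ greedy β y n :=
    Int.toNat_le_toNat (Int.floor_le_floor (mul_le_mul_of_nonneg_left hle hβ.le))
  lia

theorem greedy_strictMonoOn (hβ : 1 < β) :
    StrictMonoOn (fun t => toLex (greedy β t)) (Ico 0 1) :=
  (greedy_monotoneOn (one_pos.trans hβ)).strictMonoOn_of_injOn
    (toLex.injective.comp_injOn (greedy_injOn hβ))

end GreedyExpansions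

section LyndonIntervals

variable {β t : ℝ} {N : ℕ}

theorem seqLt_shiftN_greedy_iff (hβ : 1 < β) (ht : t ∈ Ico (0 : ℝ) 1) (k : ℕ) :
    seqLt (shiftN k (greedy β t)) (greedy β t) ↔ (Tbeta β)^[k] t < t := by
  rw [← greedy_iterate_Tbeta]
  exact (greedy_strictMonoOn hβ).lt_iff_lt (iterate_Tbeta_mem_Ico ht k) ht

theorem lyndonLeft_add_iterate_Tbeta (hβ : 0 < β) (ht : t ∈ Ico (0 : ℝ) 1) (N : ℕ) :
    lyndonLeft β (seqPrefix (greedy β t) N) + (Tbeta β)^[N] t / β ^ N = t := by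
  have hdigits : lyndonLeft β (seqPrefix (greedy β t) N) =
      ∑ i ∈ Finset.range N, (greedy β t i : ℝ) / β ^ (i + 1) := by
    rw [lyndonLeft, length_seqPrefix]
    refine Finset.sum_congr rfl fun i hi => ?_
    rw [← wordSeq_seqPrefix_of_lt (a := greedy β t) (Finset.mem_range.1 hi), wordSeq]
  rw [hdigits, sum_greedy_add_iterate_Tbeta hβ ht]

theorem mem_Ico_lyndonLeft_lyndonRight (hβ : 1 < β) (ht : t ∈ Ico (0 : ℝ) 1) (hN : 0 < N)
    (hlt : (Tbeta β)^[N] t < t) :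
    t ∈ Ico (lyndonLeft β (seqPrefix (greedy β t) N))
      (lyndonRight β (seqPrefix (greedy β t) N)) := by
  have hpow : 1 < β ^ N := one_lt_pow₀ hβ hN.ne'
  have hexpand := lyndonLeft_add_iterate_Tbeta (one_pos.trans hβ) ht N
  have hrest : 0 ≤ (Tbeta β)^[N] t / β ^ N :=
    div_nonneg (iterate_Tbeta_mem_Ico ht N).1 (by positivity)
  refine ⟨by linarith, ?_⟩
  rw [lyndonRight, length_seqPrefix, div_mul_eq_mul_div, lt_div_iff₀ (sub_pos.2 hpow)]
  have hscaled : β ^ N * lyndonLeft β (seqPrefix (greedy β t) N) + (Tbeta β)^[N] t = β ^ N * t := by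
    rw [← mul_div_cancel₀ ((Tbeta β)^[N] t) (by positivity : β ^ N ≠ 0), ← mul_add, hexpand]
  linarith

end LyndonIntervals

section Multinacci

variable {β t : ℝ} {m : ℕ}

theorem exists_greedy_eq_zero (hβ : 0 < β)
    (hsum : ∑ i ∈ Finset.range (m + 1), 1 / β ^ (i + 1) = 1) (ht : t ∈ Ico (0 : ℝ) 1) (k : ℕ) :
    ∃ j < m + 1, greedy β t (k + j) = 0 := by
  by_contra! hne
  have hx := iterate_Tbeta_mem_Ico (β := β) ht k
  have hge : 1 ≤ (Tbeta β)^[k] t := by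
    calc 1 = ∑ i ∈ Finset.range (m + 1), 1 / β ^ (i + 1) := hsum.symm
      _ ≤ ∑ i ∈ Finset.range (m + 1), (greedy β ((Tbeta β)^[k] t) i : ℝ) / β ^ (i + 1) := by
        gcongr with i hi
        rw [greedy_iterate_Tbeta, shiftN, add_comm]
        exact Nat.one_le_cast.2 (Nat.one_le_iff_ne_zero.2 (hne i (Finset.mem_range.1 hi)))
      _ ≤ (Tbeta β)^[k] t := sum_greedy_le hβ hx (m + 1)
  exact hx.2.not_ge hge

theorem exists_greedy_one_add_eq_zero (hβ : 0 < β)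
    (hsum : ∑ i ∈ Finset.range (m + 1), 1 / β ^ (i + 1) = 1) (ht : t ∈ Ico 0 (1 - 1 / β)) :
    ∃ j < m, greedy β t (1 + j) = 0 := by
  by_contra! hne
  have hpos : 0 < 1 / β := by positivity
  have hge : 1 - 1 / β ≤ t := by
    calc 1 - 1 / β = ∑ i ∈ Finset.range m, 1 / β ^ (i + 1 + 1) := by
          rw [Finset.sum_range_succ', zero_add, pow_one] at hsum
          exact (eq_sub_of_add_eq hsum).symm
      _ ≤ ∑ i ∈ Finset.range m, (greedy β t (i + 1) : ℝ) / β ^ (i + 1 + 1) := by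
        gcongr with i hi
        rw [add_comm]
        exact Nat.one_le_cast.2 (Nat.one_le_iff_ne_zero.2 (hne i (Finset.mem_range.1 hi)))
      _ ≤ ∑ i ∈ Finset.range (m + 1), (greedy β t i : ℝ) / β ^ (i + 1) := by
        rw [Finset.sum_range_succ']
        exact le_add_of_nonneg_right (by positivity)
      _ ≤ t := sum_greedy_le hβ ⟨ht.1, by linarith [ht.2]⟩ (m + 1)
  exact ht.2.not_ge hge

theorem isBetaLyndon_seqPrefix_greedy (hβ : β ∈ Ioo (1 : ℝ) 2)
    (hδ : IsQuasiGreedy β (perSeq (List.replicate m 1 ++ [0]))) (ht : t ∈ Ico 0 (1 - 1 / β))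
    {N : ℕ} (hN : 0 < N) (hlt : seqLt (shiftN N (greedy β t)) (greedy β t))
    (hmin : ∀ k, 0 < k → k < N → seqLe (greedy β t) (shiftN k (greedy β t))) :
    IsBetaLyndon β (seqPrefix (greedy β t) N) := by
  have hβ₀ : 0 < β := one_pos.trans hβ.1
  have ht₁ : t ∈ Ico (0 : ℝ) 1 := ⟨ht.1, ht.2.trans (sub_lt_self 1 (by positivity))⟩
  have hne : seqPrefix (greedy β t) N ≠ [] := List.ne_nil_of_length_pos (by simpa using hN)
  have hbin : ∀ c ∈ seqPrefix (greedy β t) N, c ≤ 1 := by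
    intro c hc
    obtain ⟨i, rfl⟩ := mem_seqPrefix.1 hc
    exact greedy_le_one hβ₀.le hβ.2.le ht₁ i
  refine ⟨hne, hbin, fun i hi₀ hi => ?_, fun d hd n => ?_⟩
  · rw [length_seqPrefix] at hi ⊢
    exact seqLt_wordSeq_take_drop_seqPrefix hlt hmin hi₀ hi
  have hsum := sum_one_div_pow_eq_one_of_tsum_eq_one hβ.1 hδ.2.2.1
  have hβt : β * t < 1 := by
    have : β * t < β * (1 - 1 / β) := by gcongr; exact ht.2
    rw [mul_sub, mul_one_div_cancel hβ₀.ne'] at this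
    linarith [hβ.2]
  have hzero {i : ℕ} (hi : greedy β t i = 0) : wordSeq (seqPrefix (greedy β t) N) i = 0 :=
    Nat.le_zero.1 (hi ▸ wordSeq_seqPrefix_le i)
  rw [hd.unique hδ]
  refine seqLt_shiftN_perSeq_replicate_append_zero hne hbin (hzero (greedy_zero_eq_zero hβt))
    (fun k => ?_) ?_ n
  · exact (exists_greedy_eq_zero hβ₀ hsum ht₁ k).imp fun j => And.imp_right hzero
  · exact (exists_greedy_one_add_eq_zero hβ₀ hsum ht).imp fun j => And.imp_right hzero

end Multinacci

/-- Let `β ∈ (1,2)` with `δ(β) = (1^m 0)^∞` for some `m ≥ 1`, let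
`t ∈ [0, 1 - 1/β)` have greedy β-expansion `(t_i)`, and let `N` be the smallest
positive integer with `T_β^N(t) < t`. Then `t_1…t_N` is a β-Lyndon word,
`t_1…t_N 0^∞ ≼ (t_i) ≺ (t_1…t_N)^∞`, and `t` lies in the β-Lyndon interval
generated by `t_1…t_N`. -/
theorem stmt_9 (β : ℝ) (hβ : β ∈ Set.Ioo (1 : ℝ) 2) (m : ℕ) (hm : 1 ≤ m)
    (hδ : IsQuasiGreedy β (perSeq (List.replicate m 1 ++ [0])))
    (t : ℝ) (ht : t ∈ Set.Ico (0 : ℝ) (1 - 1 / β))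
    (N : ℕ) (hN : 0 < N) (hlt : (Tbeta β)^[N] t < t)
    (hminN : ∀ k, 0 < k → k < N → ¬ (Tbeta β)^[k] t < t)
    (w : List ℕ) (hw : w = List.ofFn fun i : Fin N => greedy β t i) :
    IsBetaLyndon β w ∧ seqLe (wordSeq w) (greedy β t) ∧
      seqLt (greedy β t) (perSeq w) ∧
      t ∈ Set.Ico (lyndonLeft β w) (lyndonRight β w) := by
  have hβ₀ : 0 < β := one_pos.trans hβ.1
  have ht₁ : t ∈ Ico (0 : ℝ) 1 := ⟨ht.1, ht.2.trans (sub_lt_self 1 (by positivity))⟩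
  have hshift : seqLt (shiftN N (greedy β t)) (greedy β t) :=
    (seqLt_shiftN_greedy_iff hβ.1 ht₁ N).2 hlt
  have hmin (k : ℕ) (hk₀ : 0 < k) (hk : k < N) : seqLe (greedy β t) (shiftN k (greedy β t)) :=
    seqLe_iff_not_seqLt.2 <| mt (seqLt_shiftN_greedy_iff hβ.1 ht₁ k).1 (hminN k hk₀ hk)
  change w = seqPrefix (greedy β t) N at hw
  rw [hw]
  exact ⟨isBetaLyndon_seqPrefix_greedy hβ hδ ht hN hshift hmin, seqLe_wordSeq_seqPrefix,
    seqLt_perSeq_seqPrefix hN hshift, mem_Ico_lyndonLeft_lyndonRight hβ.1 ht₁ hN hlt⟩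
end

section
/- Let (x_i) ∈ {0,1}^ℕ and let s_1…s_p ∈ {0,1}^p be any finite word. Then σ^n((x_i)) ≽ s_1…s_p 0^∞ for all n ≥ 0 if and only if σ^n((x_i)) ≽ (s_1…s_p)^∞ for all n ≥ 0. -/
open Set Filter MeasureTheory

/-!
Both conditions say that no shift of `x` falls below the given sequence, so compare the violations.
A sequence lying below `w 0^∞` must differ from it inside `w`, since it cannot go below `0`; there
`w 0^∞` and `w^∞` agree, so it lies below `w^∞` as well. Conversely, if `y` lies below `w^∞` with
first difference at `k`, then dropping the `k / |w|` full copies of `w` at the start of `y` leaves a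
sequence lying below `w 0^∞`, with first difference at `k % |w|`.
-/

theorem seqLe_iff_not_seqLt_s14 (a b : ℕ → ℕ) : seqLe a b ↔ ¬ seqLt b a :=
  -- `seqLt` unfolds to the strict order of Mathlib's linear order on `Lex (ℕ → ℕ)`.
  calc
    seqLe a b ↔ toLex a ≤ toLex b :=
      (le_iff_eq_or_lt (a := toLex a) (b := toLex b)).symm
    _ ↔ ¬ toLex b < toLex a := not_lt.symm

theorem shiftN_shiftN (m n : ℕ) (x : ℕ → ℕ) : shiftN m (shiftN n x) = shiftN (m + n) x :=
  funext fun i => congrArg x (Nat.add_assoc i m n)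

theorem lt_length_of_wordSeq_pos {w : List ℕ} {i : ℕ} (hi : 0 < wordSeq w i) : i < w.length := by
  contrapose! hi
  exact (List.getD_eq_default w 0 hi).le

theorem perSeq_eq_wordSeq_of_lt {w : List ℕ} {i : ℕ} (hi : i < w.length) :
    perSeq w i = wordSeq w i :=
  congrArg (wordSeq w) (Nat.mod_eq_of_lt hi)

theorem perSeq_periodic (w : List ℕ) : Function.Periodic (perSeq w) w.length := fun i =>
  congrArg (wordSeq w) (Nat.add_mod_right i w.length)

theorem seqLt_perSeq_of_seqLt_wordSeq {y : ℕ → ℕ} {w : List ℕ} (h : seqLt y (wordSeq w)) :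
    seqLt y (perSeq w) := by
  obtain ⟨k, agree, lt⟩ := h
  have hk : k < w.length := lt_length_of_wordSeq_pos (Nat.zero_lt_of_lt lt)
  refine ⟨k, fun i hi => ?_, ?_⟩
  · rw [perSeq_eq_wordSeq_of_lt (hi.trans hk), agree i hi]
  · rwa [perSeq_eq_wordSeq_of_lt hk]

theorem exists_shiftN_seqLt_wordSeq_of_seqLt_perSeq {y : ℕ → ℕ} {w : List ℕ}
    (h : seqLt y (perSeq w)) : ∃ m, seqLt (shiftN m y) (wordSeq w) := by
  obtain ⟨k, agree, lt⟩ := h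
  have hr : k % w.length < w.length := lt_length_of_wordSeq_pos (Nat.zero_lt_of_lt lt)
  have hk : k % w.length + k / w.length * w.length = k := Nat.mod_add_div' k w.length
  refine ⟨k / w.length * w.length, k % w.length, fun i hi => ?_, ?_⟩
  · calc
      y (i + k / w.length * w.length) = perSeq w (i + k / w.length * w.length) :=
        agree _ (by omega)
      _ = perSeq w i := (perSeq_periodic w).nat_mul _ i
      _ = wordSeq w i := perSeq_eq_wordSeq_of_lt (hi.trans hr)
  · calc
      y (k % w.length + k / w.length * w.length) = y k := congrArg y hk
      _ < wordSeq w (k % w.length) := lt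

theorem stmt_14_general (x : ℕ → ℕ) (s : List ℕ) :
    (∀ n : ℕ, seqLe (wordSeq s) (shiftN n x)) ↔
      (∀ n : ℕ, seqLe (perSeq s) (shiftN n x)) := by
  simp only [seqLe_iff_not_seqLt_s14]
  constructor
  · intro not_below_word n below_per
    obtain ⟨m, below_word⟩ := exists_shiftN_seqLt_wordSeq_of_seqLt_perSeq below_per
    rw [shiftN_shiftN] at below_word
    exact not_below_word (m + n) below_word
  · exact fun not_below_per n below_word =>
      not_below_per n (seqLt_perSeq_of_seqLt_wordSeq below_word)

/-- For `(x_i) ∈ {0,1}^ℕ` and a finite word `s = s_1…s_p ∈ {0,1}^p`,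
`σ^n((x_i)) ≽ s 0^∞` for all `n ≥ 0` iff `σ^n((x_i)) ≽ s^∞` for all `n ≥ 0`. -/
theorem stmt_14 (x : ℕ → ℕ) (hx : ∀ i, x i ≤ 1) (s : List ℕ) (hs : ∀ a ∈ s, a ≤ 1) :
    (∀ n : ℕ, seqLe (wordSeq s) (shiftN n x)) ↔
      (∀ n : ℕ, seqLe (perSeq s) (shiftN n x)) :=
  stmt_14_general x s
end
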